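/- There exists a constant C < ∞ such that for every α ∈ ℝ and every ε > 0, the three-dimensional Lebesgue measure of the set {p ∈ [0,1)³ : |e(p) − α| ≤ ε} is at most C·ε. -/

import Mathlib

open MeasureTheory Real

/-- The lattice dispersion relation `e(k) = 3 - cos(2πk₁) - cos(2πk₂) - cos(2πk₃)`. -/
noncomputable def disp (k : Fin 3 → ℝ) : ℝ := 3 - ∑ i, Real.cos (2 * Real.pi * k i)

/-- The fundamental domain `[0,1)³` of the torus. -/
def box3 : Set (Fin 3 → ℝ) := Set.univ.pi fun _ => Set.Ico (0 : ℝ) 1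

/-!
On the part of the level set where `|sin (2πpᵢ)|` is the largest of the `d` gradient components,
fix the other coordinates and vary `pᵢ`. There `|sin (2πpᵢ)|` is at least the geometric mean of the
remaining `|sin (2πpⱼ)|`, so the slice is a sublevel set `|cos (2πpᵢ) - s| ≤ ε` on which the
derivative of the cosine is bounded below, and its length is
`O(ε ∏_{j ≠ i} |sin (2πpⱼ)| ^ (-1 / (d - 1)))`. The exponent is larger than `-1` as soon as `d ≥ 3`,
so this bound is integrable over the other coordinates.
-/

open Set Function
open scoped ENNReal NNReal

section PiMeasure

variable {n : ℕ}

theorem lintegral_pi_eq_lintegral_insertNth {X : Fin (n + 1) → Type*}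
    [∀ i, MeasurableSpace (X i)] (μ : ∀ i, Measure (X i)) [∀ i, SigmaFinite (μ i)]
    (i : Fin (n + 1)) {F : (∀ j, X j) → ℝ≥0∞} (hF : Measurable F) :
    ∫⁻ p, F p ∂Measure.pi μ =
      ∫⁻ y, ∫⁻ x, F (i.insertNth x y) ∂μ i ∂Measure.pi fun j ↦ μ (i.succAbove j) := by
  have hmp := (measurePreserving_piFinSuccAbove μ i).symm
  rw [← hmp.lintegral_comp_emb (MeasurableEquiv.measurableEmbedding _),
    lintegral_prod_symm' _ (by fun_prop)]
  rfl

theorem measure_pi_eq_lintegral_insertNth {X : Fin (n + 1) → Type*}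
    [∀ i, MeasurableSpace (X i)] (μ : ∀ i, Measure (X i)) [∀ i, SigmaFinite (μ i)]
    (i : Fin (n + 1)) {s : Set (∀ j, X j)} (hs : MeasurableSet s) :
    Measure.pi μ s =
      ∫⁻ y, μ i {x | i.insertNth x y ∈ s} ∂Measure.pi fun j ↦ μ (i.succAbove j) := by
  rw [← lintegral_indicator_one hs,
    lintegral_pi_eq_lintegral_insertNth μ i (measurable_one.indicator hs)]
  refine lintegral_congr fun y ↦ ?_
  have hslice : Measurable fun x ↦ i.insertNth (α := X) x y :=
    (MeasurableEquiv.piFinSuccAbove X i).symm.measurable.comp measurable_prodMk_right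
  exact lintegral_indicator_one (hslice hs)

theorem lintegral_pi_prod_eq_prod_lintegral {X : Fin n → Type*} [∀ i, MeasurableSpace (X i)]
    (μ : ∀ i, Measure (X i)) [∀ i, SigmaFinite (μ i)] {F : ∀ i, X i → ℝ≥0∞}
    (hF : ∀ i, Measurable (F i)) :
    ∫⁻ p, ∏ i, F i (p i) ∂Measure.pi μ = ∏ i, ∫⁻ x, F i x ∂μ i := by
  induction n with
  | zero => simp
  | succ n ih =>
    rw [lintegral_pi_eq_lintegral_insertNth μ 0 (by fun_prop), Fin.prod_univ_succAbove _ 0,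
      ← ih (fun j ↦ μ (Fin.succAbove 0 j)) fun j ↦ hF _, ← lintegral_const_mul _ (by fun_prop)]
    refine lintegral_congr fun y ↦ ?_
    simp only [Fin.prod_univ_succAbove _ 0, Fin.insertNth_apply_same,
      Fin.insertNth_apply_succAbove, lintegral_mul_const _ (hF 0)]

end PiMeasure

section GeometricMean

theorem prod_rpow_inv_natCast_le {n : ℕ} (hn : n ≠ 0) {a : Fin n → ℝ≥0} {b : ℝ≥0}
    (h : ∀ j, a j ≤ b) : ∏ j, a j ^ (n : ℝ)⁻¹ ≤ b := by
  calc ∏ j, a j ^ (n : ℝ)⁻¹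
      ≤ ∏ _j : Fin n, b ^ (n : ℝ)⁻¹ := by gcongr with j; exact h j
    _ = b := by simp [NNReal.rpow_inv_natCast_pow b hn]

theorem inv_coe_prod_rpow_eq_prod_rpow_neg {ι : Type*} [Fintype ι] (a : ι → ℝ≥0) {r : ℝ}
    (hr : 0 ≤ r) :
    ((∏ j, a j ^ r : ℝ≥0) : ℝ≥0∞)⁻¹ = ∏ j, (a j : ℝ≥0∞) ^ (-r) := by
  simp only [ENNReal.ofNNReal_finsetProd, ENNReal.rpow_neg, ENNReal.coe_rpow_of_nonneg _ hr]
  rw [ENNReal.prod_inv_distrib fun _ _ _ _ _ ↦ .inr (by finiteness)]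

end GeometricMean

section SeparableSum

variable {X : Type*} {f : X → ℝ} {g : X → ℝ≥0} {s ε : ℝ} {n : ℕ} {i : Fin (n + 1)}

/-- The part of the sublevel set `|∑ i, f (p i) - s| ≤ ε` on which the `i`-th coordinate maximizes
`g`, which in the application is the absolute value of the derivative of `f`. -/
def dominantPart (f : X → ℝ) (g : X → ℝ≥0) (s ε : ℝ) (i : Fin (n + 1)) : Set (Fin (n + 1) → X) :=
  {p | |∑ j, f (p j) - s| ≤ ε ∧ ∀ j, g (p j) ≤ g (p i)}

theorem abs_sum_sub_le_subset_iUnion_dominantPart (f : X → ℝ) (g : X → ℝ≥0) (s ε : ℝ) :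
    {p : Fin (n + 1) → X | |∑ j, f (p j) - s| ≤ ε} ⊆ ⋃ i, dominantPart f g s ε i := by
  intro p hp
  obtain ⟨i, hi⟩ := Finite.exists_max fun i ↦ g (p i)
  exact mem_iUnion.2 ⟨i, hp, hi⟩

theorem slice_dominantPart_subset (hn : n ≠ 0) (y : Fin n → X) :
    {x | i.insertNth x y ∈ dominantPart f g s ε i} ⊆
      {x | |f x - (s - ∑ j, f (y j))| ≤ ε ∧ ∏ j, g (y j) ^ (n : ℝ)⁻¹ ≤ g x} := by
  rintro x ⟨hsum, hmax⟩
  rw [Fin.sum_univ_succAbove _ i] at hsum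
  simp only [Fin.insertNth_apply_same, Fin.insertNth_apply_succAbove] at hsum hmax
  refine ⟨by rwa [sub_sub_eq_add_sub], prod_rpow_inv_natCast_le hn fun j ↦ ?_⟩
  simpa using hmax (i.succAbove j)

variable [MeasurableSpace X] {μ : Measure X}

theorem measurableSet_dominantPart (hf : Measurable f) (hg : Measurable g) :
    MeasurableSet (dominantPart f g s ε i) := by
  have hmax : MeasurableSet (⋂ j, {p : Fin (n + 1) → X | g (p j) ≤ g (p i)}) :=
    .iInter fun j ↦ measurableSet_le (by fun_prop) (by fun_prop)
  convert (measurableSet_le (f := fun p : Fin (n + 1) → X ↦ |∑ j, f (p j) - s|) (g := fun _ ↦ ε)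
    (by fun_prop) measurable_const).inter hmax
  ext p
  simp [dominantPart]

variable [SigmaFinite μ] {K : ℝ≥0∞}

theorem measure_pi_dominantPart_le (hn : n ≠ 0) (hf : Measurable f) (hg : Measurable g)
    (hslice : ∀ (t : ℝ) (m : ℝ≥0), μ {x | |f x - t| ≤ ε ∧ m ≤ g x} ≤ K / m) :
    Measure.pi (fun _ : Fin (n + 1) ↦ μ) (dominantPart f g s ε i) ≤
      K * (∫⁻ x, (g x : ℝ≥0∞) ^ (-(n : ℝ)⁻¹) ∂μ) ^ n := by
  calc Measure.pi (fun _ : Fin (n + 1) ↦ μ) (dominantPart f g s ε i)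
      = ∫⁻ y, μ {x | i.insertNth x y ∈ dominantPart f g s ε i} ∂Measure.pi fun _ ↦ μ :=
        measure_pi_eq_lintegral_insertNth _ i (measurableSet_dominantPart hf hg)
    _ ≤ ∫⁻ y, K * ∏ j, (g (y j) : ℝ≥0∞) ^ (-(n : ℝ)⁻¹) ∂Measure.pi fun _ : Fin n ↦ μ := by
        refine lintegral_mono fun y ↦ (measure_mono (slice_dominantPart_subset hn y)).trans ?_
        rw [← inv_coe_prod_rpow_eq_prod_rpow_neg _ (by positivity), ← div_eq_mul_inv]
        exact hslice _ _
    _ = K * (∫⁻ x, (g x : ℝ≥0∞) ^ (-(n : ℝ)⁻¹) ∂μ) ^ n := by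
        rw [lintegral_const_mul _ (by fun_prop),
          lintegral_pi_prod_eq_prod_lintegral (fun _ ↦ μ)
            (F := fun _ x ↦ (g x : ℝ≥0∞) ^ (-(n : ℝ)⁻¹)) (fun _ ↦ by fun_prop)]
        simp

theorem measure_pi_abs_sum_sub_le (hn : n ≠ 0) (hf : Measurable f) (hg : Measurable g)
    (hslice : ∀ (t : ℝ) (m : ℝ≥0), μ {x | |f x - t| ≤ ε ∧ m ≤ g x} ≤ K / m) :
    Measure.pi (fun _ ↦ μ) {p : Fin (n + 1) → X | |∑ i, f (p i) - s| ≤ ε} ≤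
      (n + 1) * (K * (∫⁻ x, (g x : ℝ≥0∞) ^ (-(n : ℝ)⁻¹) ∂μ) ^ n) := by
  calc Measure.pi (fun _ ↦ μ) {p : Fin (n + 1) → X | |∑ i, f (p i) - s| ≤ ε}
      ≤ ∑ i, Measure.pi (fun _ ↦ μ) (dominantPart f g s ε i) :=
        (measure_mono (abs_sum_sub_le_subset_iUnion_dominantPart f g s ε)).trans
          (measure_iUnion_fintype_le _ _)
    _ ≤ ∑ _i : Fin (n + 1), K * (∫⁻ x, (g x : ℝ≥0∞) ^ (-(n : ℝ)⁻¹) ∂μ) ^ n :=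
        Finset.sum_le_sum fun _ _ ↦ measure_pi_dominantPart_le hn hf hg hslice
    _ = (n + 1) * (K * (∫⁻ x, (g x : ℝ≥0∞) ^ (-(n : ℝ)⁻¹) ∂μ) ^ n) := by simp

end SeparableSum

section CosineSlice

theorem volume_le_of_mul_dist_le {E : Type*} [PseudoMetricSpace E] {A : Set ℝ} {f : ℝ → E} {s : E}
    {c ε : ℝ} (hc : 0 < c) (hA : MapsTo f A (Metric.closedBall s ε))
    (hf : ∀ x ∈ A, ∀ y ∈ A, c * dist x y ≤ dist (f x) (f y)) :
    volume A ≤ ENNReal.ofReal (2 * ε / c) := by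
  refine (volume_le_diam A).trans (Metric.ediam_le_of_forall_dist_le fun x hx y hy ↦ ?_)
  rw [le_div_iff₀' hc]
  calc c * dist x y ≤ dist (f x) (f y) := hf x hx y hy
    _ ≤ dist (f x) s + dist (f y) s := dist_triangle_right _ _ _
    _ ≤ 2 * ε := by linarith [Metric.mem_closedBall.1 (hA hx), Metric.mem_closedBall.1 (hA hy)]

theorem mul_sub_le_cos_sub_cos {a b m : ℝ} (ha : 0 ≤ a) (hab : a ≤ b) (hb : b ≤ π)
    (hma : m ≤ sin a) (hmb : m ≤ sin b) : m * (b - a) ≤ cos a - cos b := by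
  have hsin : ∀ x ∈ Icc a b, m ≤ sin x := fun x hx ↦
    (le_min hma hmb).trans <| strictConcaveOn_sin_Icc.concaveOn.min_le_of_mem_Icc
      ⟨ha, hab.trans hb⟩ ⟨ha.trans hab, hb⟩ hx
  have h := (convex_Icc a b).image_sub_le_mul_sub_of_deriv_le (C := -m) continuous_cos.continuousOn
    differentiable_cos.differentiableOn
    (fun x hx ↦ by simpa using hsin x (interior_subset hx))
    a (left_mem_Icc.2 hab) b (right_mem_Icc.2 hab) hab
  linarith

theorem mul_dist_le_dist_cos {a b m : ℝ} (ha : a ∈ Icc 0 π) (hb : b ∈ Icc 0 π)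
    (hma : m ≤ |sin a|) (hmb : m ≤ |sin b|) : m * dist a b ≤ dist (cos a) (cos b) := by
  wlog hab : a ≤ b generalizing a b
  · simpa only [dist_comm] using this hb ha hmb hma (le_of_not_ge hab)
  rw [abs_of_nonneg (sin_nonneg_of_mem_Icc ha)] at hma
  rw [abs_of_nonneg (sin_nonneg_of_mem_Icc hb)] at hmb
  rw [dist_comm a, Real.dist_eq, Real.dist_eq, abs_of_nonneg (sub_nonneg.2 hab)]
  exact (mul_sub_le_cos_sub_cos ha.1 hab hb.2 hma hmb).trans (le_abs_self _)

theorem mul_dist_le_dist_cos_of_mem_Icc_pi_two_pi {a b m : ℝ} (ha : a ∈ Icc π (2 * π))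
    (hb : b ∈ Icc π (2 * π)) (hma : m ≤ |sin a|) (hmb : m ≤ |sin b|) :
    m * dist a b ≤ dist (cos a) (cos b) := by
  have h := mul_dist_le_dist_cos (a := 2 * π - a) (b := 2 * π - b) (m := m)
    ⟨by linarith [ha.2], by linarith [ha.1]⟩ ⟨by linarith [hb.2], by linarith [hb.1]⟩
    (by simpa [sin_two_pi_sub] using hma) (by simpa [sin_two_pi_sub] using hmb)
  simpa only [cos_two_pi_sub, dist_sub_left] using h

theorem volume_abs_cos_sub_le_inter_half_le {s ε m : ℝ} (hm : 0 < m) {J : Set ℝ}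
    (hJ : J = Icc 0 (1 / 2) ∨ J = Icc (1 / 2) 1) :
    volume ({x | |cos (2 * π * x) - s| ≤ ε ∧ m ≤ |sin (2 * π * x)|} ∩ J) ≤
      ENNReal.ofReal (ε / (π * m)) := by
  have hpi := pi_pos
  have hexp : ∀ x ∈ J, ∀ y ∈ J, m ≤ |sin (2 * π * x)| → m ≤ |sin (2 * π * y)| →
      m * dist (2 * π * x) (2 * π * y) ≤ dist (cos (2 * π * x)) (cos (2 * π * y)) := by
    rcases hJ with rfl | rfl <;> rintro x ⟨hx₀, hx₁⟩ y ⟨hy₀, hy₁⟩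
    · exact mul_dist_le_dist_cos ⟨by positivity, by nlinarith⟩ ⟨by positivity, by nlinarith⟩
    · exact mul_dist_le_dist_cos_of_mem_Icc_pi_two_pi ⟨by nlinarith, by nlinarith⟩
        ⟨by nlinarith, by nlinarith⟩
  have hvol := volume_le_of_mul_dist_le (c := 2 * π * m) (f := fun x ↦ cos (2 * π * x)) (s := s)
    (ε := ε) (A := {x | |cos (2 * π * x) - s| ≤ ε ∧ m ≤ |sin (2 * π * x)|} ∩ J) (by positivity)
    (fun x hx ↦ hx.1.1) fun x hx y hy ↦ by
      have h := hexp x hx.2 y hy.2 hx.1.2 hy.1.2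
      rw [Real.dist_eq, ← mul_sub, abs_mul, abs_of_pos (by positivity : 0 < 2 * π)] at h
      rw [Real.dist_eq x]
      linarith
  rwa [mul_assoc 2 π m, mul_div_mul_left _ _ two_ne_zero] at hvol

theorem volume_abs_cos_sub_le_le {s ε : ℝ} (hε : 0 < ε) (m : ℝ≥0) :
    volume.restrict (Ico (0 : ℝ) 1) {x | |cos (2 * π * x) - s| ≤ ε ∧ m ≤ ‖sin (2 * π * x)‖₊} ≤
      ENNReal.ofReal (2 * ε / π) / m := by
  rcases eq_or_ne m 0 with rfl | hm
  · rw [ENNReal.coe_zero, ENNReal.div_zero (ENNReal.ofReal_pos.2 (by positivity)).ne']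
    exact le_top
  have hm₀ : 0 < (m : ℝ) := by positivity
  have hcover : Ico (0 : ℝ) 1 ⊆ Icc 0 (1 / 2) ∪ Icc (1 / 2) 1 := by
    rw [Icc_union_Icc_eq_Icc (by norm_num) (by norm_num)]
    exact Ico_subset_Icc_self
  simp only [← NNReal.coe_le_coe, coe_nnnorm, norm_eq_abs]
  rw [Measure.restrict_apply' measurableSet_Ico]
  calc volume ({x | |cos (2 * π * x) - s| ≤ ε ∧ (m : ℝ) ≤ |sin (2 * π * x)|} ∩ Ico 0 1)
      ≤ ENNReal.ofReal (ε / (π * m)) + ENNReal.ofReal (ε / (π * m)) := by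
        refine (measure_mono (inter_subset_inter_right _ hcover)).trans ?_
        rw [inter_union_distrib_left]
        exact (measure_union_le _ _).trans (add_le_add
          (volume_abs_cos_sub_le_inter_half_le hm₀ (.inl rfl))
          (volume_abs_cos_sub_le_inter_half_le hm₀ (.inr rfl)))
    _ = ENNReal.ofReal (2 * ε / π) / m := by
        rw [← ENNReal.ofReal_add (by positivity) (by positivity), ← ENNReal.ofReal_coe_nnreal,
          ← ENNReal.ofReal_div_of_pos hm₀]
        congr 1
        field_simp
        ring

end CosineSlice

section SineWeight

theorem intervalIntegrable_abs_sin_rpow {r : ℝ} (hr : -1 < r) (a b : ℝ) :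
    IntervalIntegrable (fun x ↦ |sin x| ^ r) volume a b := by
  rcases le_or_gt 0 r with hr₀ | hr₀
  · exact (continuous_sin.abs.rpow_const fun _ ↦ .inr hr₀).intervalIntegrable a b
  have hright : IntervalIntegrable (fun x ↦ |sin x| ^ r) volume 0 (π / 2) := by
    have hdom : IntervalIntegrable (fun x ↦ (2 / π) ^ r * x ^ r) volume 0 (π / 2) :=
      (intervalIntegral.intervalIntegrable_rpow' hr).const_mul _
    refine hdom.mono_fun (continuous_sin.abs.measurable.pow_const r).aestronglyMeasurable ?_
    filter_upwards [ae_restrict_mem measurableSet_uIoc] with x hx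
    rw [uIoc_of_le (by positivity)] at hx
    have hx₀ : 0 < x := hx.1
    have hjordan := mul_abs_le_abs_sin (x := x) (by rw [abs_of_pos hx₀]; exact hx.2)
    rw [← mul_rpow (by positivity) hx₀.le, norm_of_nonneg (by positivity),
      norm_of_nonneg (by positivity)]
    rw [abs_of_pos hx₀] at hjordan
    exact rpow_le_rpow_of_nonpos (by positivity) hjordan hr₀.le
  have hleft : IntervalIntegrable (fun x ↦ |sin x| ^ r) volume (-(π / 2)) 0 := by
    simpa using (IntervalIntegrable.iff_comp_neg (by simp)).1 hright |>.symm
  have hperiodic : Periodic (fun x ↦ |sin x| ^ r) π := fun x ↦ by simp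
  exact hperiodic.intervalIntegrable pi_ne_zero (t := -(π / 2))
    (by convert hleft.trans hright using 1; ring) a b

theorem ae_sin_two_pi_mul_ne_zero : ∀ᵐ x : ℝ, sin (2 * π * x) ≠ 0 := by
  have hcount : (range fun k : ℤ ↦ (k : ℝ) / 2).Countable := countable_range _
  filter_upwards [hcount.ae_notMem volume] with x hx hsin
  obtain ⟨k, hk⟩ := sin_eq_zero_iff.1 hsin
  refine hx ⟨k, ?_⟩
  have hk' : (k : ℝ) = 2 * x := mul_right_cancel₀ pi_ne_zero (by linarith)
  simp [hk']

theorem setLIntegral_nnnorm_sin_rpow_lt_top {r : ℝ} (hr : -1 < r) :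
    ∫⁻ x in Ico (0 : ℝ) 1, (‖sin (2 * π * x)‖₊ : ℝ≥0∞) ^ r < ∞ := by
  have hint : IntegrableOn (fun x ↦ |sin (2 * π * x)| ^ r) (Ico 0 1) := by
    rw [← intervalIntegrable_iff_integrableOn_Ico_of_le zero_le_one]
    simpa [pi_ne_zero] using
      (intervalIntegrable_abs_sin_rpow hr 0 (2 * π)).comp_mul_left (c := 2 * π)
  -- At the zeros of the sine a negative power is `∞` in `ℝ≥0∞` but `0` in `ℝ`.
  refine (lintegral_congr_ae ?_).trans_lt hint.lintegral_lt_top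
  filter_upwards [ae_restrict_of_ae ae_sin_two_pi_mul_ne_zero] with x hx
  rw [← ENNReal.ofReal_rpow_of_pos (abs_pos.2 hx), ← norm_eq_abs, ofReal_norm, enorm_eq_nnnorm]

end SineWeight

theorem volume_box_abs_sum_cos_sub_le {n : ℕ} (hn : n ≠ 0) {ε : ℝ} (hε : 0 < ε) (s : ℝ) :
    volume {p ∈ univ.pi fun _ : Fin (n + 1) ↦ Ico (0 : ℝ) 1 | |∑ i, cos (2 * π * p i) - s| ≤ ε} ≤
      (n + 1) * (ENNReal.ofReal (2 * ε / π) *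
        (∫⁻ x in Ico (0 : ℝ) 1, (‖sin (2 * π * x)‖₊ : ℝ≥0∞) ^ (-(n : ℝ)⁻¹)) ^ n) := by
  change volume ((univ.pi fun _ ↦ Ico (0 : ℝ) 1) ∩ {p | |∑ i, cos (2 * π * p i) - s| ≤ ε}) ≤ _
  rw [inter_comm, ← Measure.restrict_apply' (.univ_pi fun _ ↦ measurableSet_Ico), volume_pi,
    Measure.restrict_pi_pi]
  exact measure_pi_abs_sum_sub_le (f := fun x ↦ cos (2 * π * x))
    (g := fun x ↦ ‖sin (2 * π * x)‖₊) hn (by fun_prop) (by fun_prop) fun _ m ↦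
      volume_abs_cos_sub_le_le hε m

theorem level_set_measure_3d_general {d : ℕ} (hd : 3 ≤ d) :
    ∃ C : ℝ, ∀ α : ℝ, ∀ ε : ℝ, 0 < ε →
      volume {p ∈ univ.pi fun _ : Fin d ↦ Ico (0 : ℝ) 1 | |d - ∑ i, cos (2 * π * p i) - α| ≤ ε} ≤
        ENNReal.ofReal (C * ε) := by
  obtain ⟨n, rfl⟩ : ∃ n, d = n + 1 := ⟨d - 1, by lia⟩
  have hexp : -1 < -(n : ℝ)⁻¹ :=
    neg_lt_neg (inv_lt_one_of_one_lt₀ (by exact_mod_cast (by lia : 1 < n)))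
  have hW := (setLIntegral_nnnorm_sin_rpow_lt_top hexp).ne
  set W := ∫⁻ x in Ico (0 : ℝ) 1, (‖sin (2 * π * x)‖₊ : ℝ≥0∞) ^ (-(n : ℝ)⁻¹)
  have hC : (n + 1) * (ENNReal.ofReal (2 / π) * W ^ n) ≠ ∞ := by finiteness
  refine ⟨((n + 1) * (ENNReal.ofReal (2 / π) * W ^ n)).toReal, fun α ε hε ↦ ?_⟩
  simp only [sub_right_comm _ _ α, abs_sub_comm _ (∑ _, _)]
  calc _ ≤ (n + 1) * (ENNReal.ofReal (2 * ε / π) * W ^ n) :=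
        volume_box_abs_sum_cos_sub_le (by lia) hε _
    _ = (n + 1) * (ENNReal.ofReal (2 / π) * W ^ n) * ENNReal.ofReal ε := by
        rw [mul_div_right_comm, ENNReal.ofReal_mul (by positivity)]
        ring
    _ = _ := by rw [ENNReal.ofReal_mul ENNReal.toReal_nonneg, ENNReal.ofReal_toReal hC]

theorem level_set_measure_3d :
    ∃ C : ℝ, ∀ α : ℝ, ∀ ε : ℝ, 0 < ε →
      volume {p ∈ box3 | |disp p - α| ≤ ε} ≤ ENNReal.ofReal (C * ε) := by
  simpa [disp, box3] using level_set_measure_3d_general le_rfl
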